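/- The functional 𝓡_{ψ,κ,P} : L²(P) → ℝ is lower semicontinuous with respect to the weak topology of L²(P) and strictly convex, in the sense that whenever h₀, h₁ ∈ L²(P) satisfy P(h₀ ≠ h₁) > 0 one has (𝓡_{ψ,κ,P}(h₀) + 𝓡_{ψ,κ,P}(h₁))/2 > 𝓡_{ψ,κ,P}((h₀ + h₁)/2). Consequently, the minimum of 𝓡_{ψ,κ,P} over the closed unit ball {h ∈ L²(P) : ‖h‖_P ≤ 1} is attained at a function h* which is unique up to P-null sets. -/

import Mathlib

open MeasureTheory ProbabilityTheory Real Filter Set Topology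

noncomputable section

namespace MaxMargin

/-- The standard Gaussian measure on `ℝ`. -/
def stdG : Measure ℝ := gaussianReal 0 1

/-- The function `F_κ(c₁,c₂) = (E[((κ − c₁·Y·G − c₂·Z)₊)²])^{1/2}` where `G, Z` are independent
standard Gaussians and, conditionally on `G`, `Y ∈ {+1,−1}` with `P(Y = +1 | G) = f(G)`. -/
def Fk (f : ℝ → ℝ) (κ c₁ c₂ : ℝ) : ℝ :=
  Real.sqrt (∫ g, ∫ z,
    (f g * (max (κ - c₁ * g - c₂ * z) 0) ^ 2
      + (1 - f g) * (max (κ + c₁ * g - c₂ * z) 0) ^ 2) ∂stdG ∂stdG)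

/-- Non-degeneracy of `f`: the variable `T = Y·G` satisfies `P(T < x) > 0` and `P(T > x) > 0`
for every `x ∈ ℝ`. -/
def NonDeg (f : ℝ → ℝ) : Prop :=
  ∀ x : ℝ,
    (0 < ∫ g, (f g * (if g < x then (1:ℝ) else 0)
          + (1 - f g) * (if -g < x then (1:ℝ) else 0)) ∂stdG) ∧
    (0 < ∫ g, (f g * (if x < g then (1:ℝ) else 0)
          + (1 - f g) * (if x < -g then (1:ℝ) else 0)) ∂stdG)


/-- Points of `ℝ³` carrying the coordinates `(G, X, W)`. -/
abbrev Pt : Type := ℝ × ℝ × ℝ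

/-- First coordinate `G`. -/
def Gc : Pt → ℝ := fun q => q.1

/-- Second coordinate `X`. -/
def Xc : Pt → ℝ := fun q => q.2.1

/-- Third coordinate `W`. -/
def Wc : Pt → ℝ := fun q => q.2.2

/-- The inner product `⟨h₁,h₂⟩_P = E_P[h₁h₂]`. -/
def ip (P : Measure Pt) (h₁ h₂ : Pt → ℝ) : ℝ := ∫ q, h₁ q * h₂ q ∂P

/-- The norm `‖h‖_P = ⟨h,h⟩_P^{1/2}`. -/
def pnorm (P : Measure Pt) (h : Pt → ℝ) : ℝ := Real.sqrt (ip P h h)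

/-- Projection onto the orthogonal complement of `W`: `Π_{W⊥}(h) = h − ⟨h,W⟩_P·W`. -/
def projW (P : Measure Pt) (h : Pt → ℝ) : Pt → ℝ := fun q => h q - ip P h Wc * Wc q

/-- Partial derivative of `F_κ` in its first argument. -/
def d1F (f : ℝ → ℝ) (κ c₁ c₂ : ℝ) : ℝ := deriv (fun t => Fk f κ t c₂) c₁

/-- Partial derivative of `F_κ` in its second argument. -/
def d2F (f : ℝ → ℝ) (κ c₁ c₂ : ℝ) : ℝ := deriv (fun t => Fk f κ c₁ t) c₂

/-- `ψ*(0) = min_{c ∈ ℝ} F₀(c,1)²`. -/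
def psiStar0 (f : ℝ → ℝ) : ℝ := ⨅ c : ℝ, (Fk f 0 c 1) ^ 2

/-- The functional `𝓡_{ψ,κ,P}(h) = ψ^{−1/2}·F_κ(⟨h, X^{1/2}W⟩_P, ‖Π_{W⊥}(X^{1/2}h)‖_P)
+ ⟨h, X^{1/2}·Π_{W⊥}(G)⟩_P`. -/
def Rfun (f : ℝ → ℝ) (P : Measure Pt) (ψ κ : ℝ) (h : Pt → ℝ) : ℝ :=
  (Real.sqrt ψ)⁻¹ *
      Fk f κ (ip P h (fun q => Real.sqrt (Xc q) * Wc q))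
        (pnorm P (projW P (fun q => Real.sqrt (Xc q) * h q)))
    + ip P h (fun q => Real.sqrt (Xc q) * projW P Gc q)

/-- `ζ(P) = ‖X^{−1/2}W‖_P^{−1}`. -/
def zetaP (P : Measure Pt) : ℝ := (pnorm P (fun q => (Real.sqrt (Xc q))⁻¹ * Wc q))⁻¹

/-!
`F_κ(c)` is the norm of the positive part of `κ - c` in `L²` of the law of `(Y·G, Z)`, and `κ - c`
is affine in `c`. Monotonicity of the norm and the triangle inequality give convexity. Since `L²` is
strictly convex, the inequality is strict unless the hinges of `c` and `d` are proportional
almost everywhere, hence on the support of the law. That support contains a neighbourhood of `0`, on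
which `κ > 0` keeps both hinges affine, and this forces `c = d`.

Strictness survives replacing the second argument by the norm of the component orthogonal to `W`,
because `F_κ` is even in that argument and the norm of a Hilbert space is strictly convex, and it
survives multiplication by `√X`, which is injective. A continuous convex function is weakly lower
semicontinuous because closed convex sets are weakly closed, and it attains its minimum on the unit
ball because that ball is weakly compact.
-/

section StrictConvexity

variable {E F : Type*} [AddCommGroup E] [Module ℝ E] [AddCommGroup F] [Module ℝ F]

lemma strictConvexOn_comp_linearMap {s : Set F} {g : F → ℝ} (hg : StrictConvexOn ℝ s g)
    {A : E →ₗ[ℝ] F} (hA : Function.Injective A) : StrictConvexOn ℝ (A ⁻¹' s) (g ∘ A) := by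
  refine ⟨hg.1.linear_preimage A, fun x hx y hy hxy a b ha hb hab => ?_⟩
  simpa using hg.2 hx hy (hA.ne hxy) ha hb hab

lemma strictConvexOn_const_mul {s : Set E} {g : E → ℝ} (hg : StrictConvexOn ℝ s g) {c : ℝ}
    (hc : 0 < c) : StrictConvexOn ℝ s (fun x => c * g x) := by
  refine ⟨hg.1, fun x hx y hy hxy a b ha hb hab => ?_⟩
  have h := mul_lt_mul_of_pos_left (hg.2 hx hy hxy ha hb hab) hc
  simp only [smul_eq_mul] at h ⊢
  linarith

lemma lt_half_add_of_strictConvexOn {g : E → ℝ} (hg : StrictConvexOn ℝ univ g) {x y : E}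
    (hxy : x ≠ y) : g ((2 : ℝ)⁻¹ • (x + y)) < (g x + g y) / 2 := by
  have hhalf : (0 : ℝ) < 2⁻¹ := by norm_num
  have h := hg.2 (mem_univ x) (mem_univ y) hxy hhalf hhalf (by norm_num)
  rw [← smul_add, ← smul_add, smul_eq_mul] at h
  linarith

lemma strictMonoOn_Ici_of_strictConvexOn_of_even {g : ℝ → ℝ} (hg : StrictConvexOn ℝ univ g)
    (heven : g.Even) : StrictMonoOn g (Ici 0) := by
  intro b hb b' _ hlt
  have hb' : -b' < b' := by linarith [mem_Ici.1 hb]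
  have hmem : b ∈ openSegment ℝ (-b') b' := by
    rw [openSegment_eq_Ioo hb']
    exact ⟨by linarith [mem_Ici.1 hb], hlt⟩
  simpa [heven b'] using hg.lt_on_openSegment (mem_univ _) (mem_univ _) hb'.ne hmem

lemma strictConvexOn_prodMk_left {g : E × F → ℝ} (hg : StrictConvexOn ℝ univ g) (x : E) :
    StrictConvexOn ℝ univ (fun y => g (x, y)) := by
  refine ⟨convex_univ, fun y _ y' _ hne a b ha hb hab => ?_⟩
  have h := hg.2 (mem_univ (x, y)) (mem_univ (x, y')) (by simpa using hne) ha hb hab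
  simpa [Convex.combo_self hab] using h

variable {V : Type*} [NormedAddCommGroup V] [NormedSpace ℝ V] [StrictConvexSpace ℝ V]

/- If the two norms agree but the vectors differ, strict convexity of the ball makes the norm of
the combination drop, and `g` is strictly increasing in its second argument; otherwise strict
convexity of `g` itself applies. -/
lemma strictConvexOn_comp_norm_snd {g : E × ℝ → ℝ} (hg : StrictConvexOn ℝ univ g)
    (heven : ∀ x, Function.Even fun t => g (x, t)) :
    StrictConvexOn ℝ univ (fun p : E × V => g (p.1, ‖p.2‖)) := by
  have hmono (x : E) : StrictMonoOn (fun t => g (x, t)) (Ici 0) :=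
    strictMonoOn_Ici_of_strictConvexOn_of_even (strictConvexOn_prodMk_left hg x) (heven x)
  refine ⟨convex_univ, ?_⟩
  rintro ⟨x, v⟩ - ⟨y, w⟩ - hne a b ha hb hab
  change g (a • x + b • y, ‖a • v + b • w‖) < a * g (x, ‖v‖) + b * g (y, ‖w‖)
  by_cases heq : (x, ‖v‖) = (y, ‖w‖)
  · obtain ⟨rfl, hvw⟩ := Prod.mk.inj heq
    have hne' : v ≠ w := fun h => hne (by rw [h])
    calc g (a • x + b • x, ‖a • v + b • w‖) = g (x, ‖a • v + b • w‖) := by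
          rw [Convex.combo_self hab]
      _ < g (x, ‖w‖) := hmono x (norm_nonneg _) (norm_nonneg _)
          (norm_combo_lt_of_ne hvw.le le_rfl hne' ha hb hab)
      _ = a * g (x, ‖v‖) + b * g (x, ‖w‖) := by rw [hvw, ← add_mul, hab, one_mul]
  · have hnorm : ‖a • v + b • w‖ ≤ a * ‖v‖ + b * ‖w‖ := by
      simpa [norm_smul, abs_of_pos ha, abs_of_pos hb] using norm_add_le (a • v) (b • w)
    calc g (a • x + b • y, ‖a • v + b • w‖)
        ≤ g (a • x + b • y, a * ‖v‖ + b * ‖w‖) :=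
          (hmono _).monotoneOn (norm_nonneg _) ((norm_nonneg _).trans hnorm) hnorm
      _ < a * g (x, ‖v‖) + b * g (y, ‖w‖) := hg.2 (mem_univ _) (mem_univ _) heq ha hb hab

end StrictConvexity

section WeakTopology

variable {E : Type*} [AddCommGroup E] [Module ℝ E] [TopologicalSpace E] [IsTopologicalAddGroup E]
  [ContinuousSMul ℝ E] [LocallyConvexSpace ℝ E] {β : Type*} [LinearOrder β]

lemma isClosed_toWeakSpace_image {s : Set E} (hconv : Convex ℝ s) (hcl : IsClosed s) :
    IsClosed (toWeakSpace ℝ E '' s) := by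
  rw [← hcl.closure_eq, hconv.toWeakSpace_closure ℝ]
  exact isClosed_closure

lemma lowerSemicontinuous_comp_toWeakSpace_symm {R : E → β} (hlsc : LowerSemicontinuous R)
    (hconv : QuasiconvexOn ℝ univ R) :
    LowerSemicontinuous (R ∘ (toWeakSpace ℝ E).symm) := by
  rw [lowerSemicontinuous_iff_isClosed_preimage] at hlsc ⊢
  intro y
  rw [preimage_comp, ← LinearEquiv.image_eq_preimage_symm]
  refine isClosed_toWeakSpace_image ?_ (hlsc y)
  simpa [preimage] using hconv y

variable {X : Type*} [NormedAddCommGroup X] [NormedSpace ℝ X]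

lemma isCompact_toWeakSpace_image
    (hrefl : Function.Surjective (NormedSpace.inclusionInDoubleDual ℝ X)) {K : Set X}
    (hconv : Convex ℝ K) (hcl : IsClosed K) (hbdd : Bornology.IsBounded K) :
    IsCompact (toWeakSpace ℝ X '' K) := by
  rw [← (isClosed_toWeakSpace_image hconv hcl).closure_eq]
  refine NormedSpace.isCompact_closure_of_isBounded ℝ X _
    (by rwa [preimage_image_eq _ (toWeakSpace ℝ X).injective]) ?_
  rintro φ -
  obtain ⟨x, hx⟩ := hrefl (WeakDual.toStrongDual φ)
  exact ⟨toWeakSpace ℝ X x, hx⟩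

lemma exists_isMinOn_of_reflexive
    (hrefl : Function.Surjective (NormedSpace.inclusionInDoubleDual ℝ X)) {R : X → β}
    (hlsc : LowerSemicontinuous R) (hquasi : QuasiconvexOn ℝ univ R) {K : Set X}
    (hne : K.Nonempty) (hconv : Convex ℝ K) (hcl : IsClosed K) (hbdd : Bornology.IsBounded K) :
    ∃ x ∈ K, IsMinOn R K x := by
  obtain ⟨_, ⟨x, hxK, rfl⟩, hmin⟩ := LowerSemicontinuousOn.exists_isMinOn
    (hne.image (toWeakSpace ℝ X)) (isCompact_toWeakSpace_image hrefl hconv hcl hbdd)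
    ((lowerSemicontinuous_comp_toWeakSpace_symm hlsc hquasi).lowerSemicontinuousOn _)
  exact ⟨x, hxK, fun y hy => hmin (mem_image_of_mem _ hy)⟩

lemma surjective_inclusionInDoubleDual_of_hilbert {H : Type*} [NormedAddCommGroup H]
    [InnerProductSpace ℝ H] [CompleteSpace H] :
    Function.Surjective (NormedSpace.inclusionInDoubleDual ℝ H) := by
  intro φ
  let ψ : StrongDual ℝ H :=
    { toFun := fun x => φ (InnerProductSpace.toDual ℝ H x)
      map_add' := by simp
      map_smul' := by simp
      cont := by fun_prop }
  refine ⟨(InnerProductSpace.toDual ℝ H).symm ψ, ?_⟩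
  ext y
  obtain ⟨z, rfl⟩ := (InnerProductSpace.toDual ℝ H).surjective y
  rw [NormedSpace.dual_def, InnerProductSpace.toDual_apply_apply, real_inner_comm,
    InnerProductSpace.toDual_symm_apply]
  rfl

end WeakTopology

section PosPart

variable {V : Type*} [NormedAddCommGroup V] [Lattice V] [HasSolidNorm V] [IsOrderedAddMonoid V]
  [NormedSpace ℝ V] [PosSMulMono ℝ V]

lemma norm_posPart_combo_le {a b : ℝ} (ha : 0 ≤ a) (hb : 0 ≤ b) (x y : V) :
    ‖(a • x + b • y)⁺‖ ≤ ‖a • x⁺ + b • y⁺‖ := by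
  have hnonneg : 0 ≤ a • x⁺ + b • y⁺ :=
    add_nonneg (smul_nonneg ha (posPart_nonneg x)) (smul_nonneg hb (posPart_nonneg y))
  refine norm_le_norm_of_abs_le_abs ?_
  rw [abs_of_nonneg (posPart_nonneg _), abs_of_nonneg hnonneg]
  exact sup_le (by gcongr <;> exact le_posPart _) hnonneg

lemma strictConvexOn_norm_posPart [StrictConvexSpace ℝ V] {E : Type*} [AddCommGroup E]
    [Module ℝ E] {s : Set E} (hs : Convex ℝ s) (u : E →ᵃ[ℝ] V)
    (hray : s.Pairwise fun x y => ¬SameRay ℝ (u x)⁺ (u y)⁺) :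
    StrictConvexOn ℝ s (fun x => ‖(u x)⁺‖) := by
  refine ⟨hs, fun x hx y hy hne a b ha hb hab => ?_⟩
  have hray' : ¬SameRay ℝ (a • (u x)⁺) (b • (u y)⁺) := by
    intro h
    refine hray hx hy hne ?_
    simpa [ha.ne', hb.ne'] using (h.pos_smul_left (inv_pos.2 ha)).pos_smul_right (inv_pos.2 hb)
  calc ‖(u (a • x + b • y))⁺‖ = ‖(a • u x + b • u y)⁺‖ := by rw [Convex.combo_affine_apply hab]
    _ ≤ ‖a • (u x)⁺ + b • (u y)⁺‖ := norm_posPart_combo_le ha.le hb.le _ _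
    _ < ‖a • (u x)⁺‖ + ‖b • (u y)⁺‖ := norm_add_lt_of_not_sameRay hray'
    _ = a • ‖(u x)⁺‖ + b • ‖(u y)⁺‖ := by
      simp only [norm_smul, Real.norm_of_nonneg ha.le, Real.norm_of_nonneg hb.le, smul_eq_mul]

end PosPart

section L2

variable {α : Type*} [MeasurableSpace α] {μ : Measure α}

instance {p : ENNReal} : PosSMulMono ℝ (Lp ℝ p μ) where
  smul_le_smul_of_nonneg_left a ha x y hxy := by
    rw [← Lp.coeFn_le] at hxy ⊢
    filter_upwards [hxy, Lp.coeFn_smul a x, Lp.coeFn_smul a y] with t ht hx hy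
    simpa only [hx, hy, Pi.smul_apply] using smul_le_smul_of_nonneg_left ht ha

lemma inner_eq_integral_mul {x y : Lp ℝ 2 μ} {u v : α → ℝ} (hx : x =ᵐ[μ] u) (hy : y =ᵐ[μ] v) :
    inner ℝ x y = ∫ t, u t * v t ∂μ := by
  rw [L2.inner_def]
  refine integral_congr_ae ?_
  filter_upwards [hx, hy] with t hxt hyt
  simp only [hxt, hyt, RCLike.inner_apply, conj_trivial, mul_comm]

lemma norm_eq_sqrt_integral_mul_self {x : Lp ℝ 2 μ} {u : α → ℝ} (hx : x =ᵐ[μ] u) :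
    ‖x‖ = √(∫ t, u t * u t ∂μ) := by
  rw [norm_eq_sqrt_real_inner, inner_eq_integral_mul hx hx]

end L2

section HingeNorm

lemma eqOn_support_of_ae_eq {α β : Type*} [TopologicalSpace α] [MeasurableSpace α]
    [TopologicalSpace β] [T2Space β] {μ : Measure α} {u v : α → β} (hu : Continuous u)
    (hv : Continuous v) (huv : u =ᵐ[μ] v) : EqOn u v μ.support := by
  have hsub : {x | u x ≠ v x} ⊆ μ.supportᶜ :=
    Measure.subset_compl_support_of_isOpen (isOpen_ne_fun hu hv) (ae_iff.1 huv)
  exact fun x hx => by_contra fun hne => hsub hne hx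

variable {E : Type*} [NormedAddCommGroup E] [NormedSpace ℝ E]

lemma eq_of_mul_hinge_eventuallyEq {κ : ℝ} (hκ : 0 < κ) {c d : StrongDual ℝ E} {a b : ℝ}
    (hab : a + b = 1)
    (h : (fun x => a * max (κ - c x) 0) =ᶠ[𝓝 0] fun x => b * max (κ - d x) 0) : c = d := by
  have hab' : a = b := by simpa [hκ.le, hκ.ne'] using h.self_of_nhds
  have ha : a ≠ 0 := by rintro rfl; simp [← hab'] at hab
  have hpos (e : StrongDual ℝ E) : ∀ᶠ x in 𝓝 (0 : E), 0 < κ - e x :=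
    (continuous_const.sub e.continuous).continuousAt.eventually_const_lt (by simpa using hκ)
  have hcd : c =ᶠ[𝓝 0] d := by
    filter_upwards [h, hpos c, hpos d] with x hx hcx hdx
    rw [max_eq_left hcx.le, max_eq_left hdx.le, ← hab'] at hx
    linarith [mul_left_cancel₀ ha hx]
  simpa using hcd.fderiv_eq (𝕜 := ℝ)

variable [MeasurableSpace E] {μ : Measure E} {κ : ℝ}

/-- The `L²(μ)` norm of the hinge loss `x ↦ (κ - c x)₊` of a linear functional `c`; the function
`F_κ` is the case of a two-dimensional `E`. -/
def hingeNorm (μ : Measure E) (κ : ℝ) (c : StrongDual ℝ E) : ℝ :=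
  √(∫ x, max (κ - c x) 0 ^ 2 ∂μ)

lemma integrable_sq_hinge [IsFiniteMeasure μ] (hμ : MemLp id 2 μ) (κ : ℝ) (c : StrongDual ℝ E) :
    Integrable (fun x => max (κ - c x) 0 ^ 2) μ :=
  ((memLp_const κ).sub (hμ.continuousLinearMap_comp c)).pos_part.integrable_sq

variable [OpensMeasurableSpace E] [IsFiniteMeasure μ]

/-- The margin deficit `κ - c`, as an affine function of the functional `c` with values in
`L²(μ)`. It is meaningful when `μ` has a second moment: `StrongDual.toLp` is `0` otherwise. -/
def marginDeficit (μ : Measure E) [IsFiniteMeasure μ] (κ : ℝ) : StrongDual ℝ E →ᵃ[ℝ] Lp ℝ 2 μ :=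
  AffineMap.const ℝ _ (Lp.const 2 μ κ) - (StrongDual.toLp μ 2).toLinearMap.toAffineMap

lemma coeFn_posPart_marginDeficit (hμ : MemLp id 2 μ) (κ : ℝ) (c : StrongDual ℝ E) :
    ((marginDeficit μ κ c)⁺ : Lp ℝ 2 μ) =ᵐ[μ] fun x => max (κ - c x) 0 := by
  have hcL : MemLp c 2 μ := hμ.continuousLinearMap_comp c
  have hdef : marginDeficit μ κ c = Lp.const 2 μ κ - hcL.toLp c :=
    congrArg (Lp.const 2 μ κ - ·) (StrongDual.toLp_apply hμ c)
  filter_upwards [Lp.coeFn_sup (marginDeficit μ κ c) 0, Lp.coeFn_zero ℝ 2 μ,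
    Lp.coeFn_sub (Lp.const 2 μ κ) (hcL.toLp c), Lp.coeFn_const 2 μ κ, hcL.coeFn_toLp]
    with x hsup hzero hsub hκ hc
  rw [posPart_def, hsup, Pi.sup_apply, hzero, hdef, hsub, Pi.sub_apply, hκ, hc]
  rfl

lemma hingeNorm_eq_norm_posPart (hμ : MemLp id 2 μ) (κ : ℝ) (c : StrongDual ℝ E) :
    hingeNorm μ κ c = ‖(marginDeficit μ κ c)⁺‖ := by
  simp only [hingeNorm, sq, norm_eq_sqrt_integral_mul_self (coeFn_posPart_marginDeficit hμ κ c)]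

lemma not_sameRay_posPart_marginDeficit (hμ : MemLp id 2 μ) (hκ : 0 < κ)
    (h0 : (0 : E) ∈ interior μ.support) {c d : StrongDual ℝ E} (hcd : c ≠ d) :
    ¬SameRay ℝ (marginDeficit μ κ c)⁺ (marginDeficit μ κ d)⁺ := by
  intro hray
  obtain ⟨w, a, b, -, -, hab, hc, hd⟩ := hray.exists_eq_smul
  have hcross : b • (marginDeficit μ κ c)⁺ = a • (marginDeficit μ κ d)⁺ := by
    rw [hc, hd, smul_comm]
  have hae : (fun x => b * max (κ - c x) 0) =ᵐ[μ] fun x => a * max (κ - d x) 0 := by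
    filter_upwards [coeFn_posPart_marginDeficit hμ κ c, coeFn_posPart_marginDeficit hμ κ d,
      Lp.coeFn_smul b (marginDeficit μ κ c)⁺, Lp.coeFn_smul a (marginDeficit μ κ d)⁺]
      with x hcx hdx hbx hax
    rw [hcross, hax, Pi.smul_apply, Pi.smul_apply, hcx, hdx] at hbx
    exact hbx.symm
  have heq := eqOn_support_of_ae_eq (by fun_prop) (by fun_prop) hae
  exact hcd (eq_of_mul_hinge_eventuallyEq hκ (by rwa [add_comm])
    (heq.eventuallyEq_of_mem (mem_interior_iff_mem_nhds.1 h0)))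

lemma strictConvexOn_hingeNorm (hμ : MemLp id 2 μ) (hκ : 0 < κ)
    (h0 : (0 : E) ∈ interior μ.support) : StrictConvexOn ℝ univ (hingeNorm μ κ) := by
  simp only [funext (hingeNorm_eq_norm_posPart hμ κ)]
  exact strictConvexOn_norm_posPart convex_univ (marginDeficit μ κ)
    fun c _ d _ hcd => not_sameRay_posPart_marginDeficit hμ hκ h0 hcd

end HingeNorm

section Support

lemma prod_support_subset {α β : Type*} [TopologicalSpace α] [MeasurableSpace α]
    [TopologicalSpace β] [MeasurableSpace β] (μ : Measure α) (ν : Measure β) [SFinite ν] :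
    μ.support ×ˢ ν.support ⊆ (μ.prod ν).support := by
  rintro ⟨x, y⟩ ⟨hx, hy⟩
  rw [Measure.mem_support_iff_forall] at hx hy ⊢
  intro U hU
  obtain ⟨s, hs, t, ht, hst⟩ := mem_nhds_prod_iff.1 hU
  calc 0 < μ s * ν t := ENNReal.mul_pos (hx s hs).ne' (hy t ht).ne'
    _ = (μ.prod ν) (s ×ˢ t) := (Measure.prod_prod s t).symm
    _ ≤ (μ.prod ν) U := measure_mono hst

lemma mem_support_withDensity {α : Type*} [TopologicalSpace α] [MeasurableSpace α]
    {μ : Measure α} [μ.IsOpenPosMeasure] {ρ : α → ENNReal} (hρ : Measurable ρ) {x : α}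
    (hx : ∀ᶠ y in 𝓝 x, ρ y ≠ 0) : x ∈ (μ.withDensity ρ).support := by
  rw [Measure.mem_support_iff_forall]
  intro U hU
  rw [pos_iff_ne_zero, Ne, withDensity_apply_eq_zero hρ]
  exact (μ.measure_pos_of_mem_nhds (inter_mem hx hU)).ne'

lemma mem_interior_support_withDensity {α : Type*} [TopologicalSpace α] [MeasurableSpace α]
    {μ : Measure α} [μ.IsOpenPosMeasure] {ρ : α → ENNReal} (hρ : Measurable ρ) {x : α}
    (hx : ∀ᶠ y in 𝓝 x, ρ y ≠ 0) : x ∈ interior (μ.withDensity ρ).support :=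
  mem_interior_iff_mem_nhds.2 <|
    (eventually_eventually_nhds.2 hx).mono fun _ hy => mem_support_withDensity hρ hy

end Support

section Gaussian

instance : IsGaussian stdG := by unfold stdG; infer_instance

instance : stdG.IsOpenPosMeasure :=
  (gaussianReal_absolutelyContinuous' 0 one_ne_zero).isOpenPosMeasure

lemma measurePreserving_neg_stdG : MeasurePreserving Neg.neg stdG stdG :=
  ⟨measurable_neg, by simpa [stdG] using gaussianReal_map_neg (μ := 0) (v := 1)⟩

lemma integral_comp_neg_stdG (φ : ℝ → ℝ) : ∫ t, φ (-t) ∂stdG = ∫ t, φ t ∂stdG :=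
  measurePreserving_neg_stdG.integral_comp (MeasurableEquiv.neg ℝ).measurableEmbedding φ

lemma Fk_neg_right (f : ℝ → ℝ) (κ c₁ c₂ : ℝ) : Fk f κ c₁ (-c₂) = Fk f κ c₁ c₂ := by
  unfold Fk
  congr 2 with g
  simpa only [neg_mul, mul_neg] using integral_comp_neg_stdG fun z =>
    f g * max (κ - c₁ * g - c₂ * z) 0 ^ 2 + (1 - f g) * max (κ + c₁ * g - c₂ * z) 0 ^ 2

/-- The law of `T = Y·G`. Its density with respect to `N(0,1)` collects the two ways to reach `t`:
either `G = t` and `Y = 1`, or `G = -t` and `Y = -1`. -/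
def labelLaw (f : ℝ → ℝ) : Measure ℝ :=
  stdG.withDensity fun t => ENNReal.ofReal (f t + (1 - f (-t)))

variable {f : ℝ → ℝ} {κ : ℝ}

lemma labelLaw_le (hf01 : ∀ x, f x ∈ Icc 0 1) : labelLaw f ≤ (2 : ENNReal) • stdG := by
  rw [← withDensity_const]
  refine withDensity_mono (ae_of_all _ fun t => ENNReal.ofReal_le_of_le_toReal ?_)
  rw [ENNReal.toReal_ofNat]
  linarith [(hf01 t).2, (hf01 (-t)).1]

lemma isFiniteMeasure_labelLaw (hf01 : ∀ x, f x ∈ Icc 0 1) : IsFiniteMeasure (labelLaw f) :=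
  haveI := stdG.smul_finite (c := 2) ENNReal.ofNat_ne_top
  isFiniteMeasure_of_le _ (labelLaw_le hf01)

lemma zero_mem_interior_support_labelLaw (hf : Measurable f) (hf0 : ContinuousAt f 0) :
    0 ∈ interior (labelLaw f).support := by
  refine mem_interior_support_withDensity (by fun_prop) ?_
  have hneg : ContinuousAt (fun t => f (-t)) 0 := by
    refine ContinuousAt.comp ?_ continuous_neg.continuousAt
    rwa [neg_zero]
  have hcont : ContinuousAt (fun t => f t + (1 - f (-t))) 0 :=
    hf0.add (continuousAt_const.sub hneg)
  filter_upwards [hcont.eventually_const_lt (u := 0) (by simp)] with t ht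
  exact (ENNReal.ofReal_pos.2 ht).ne'

lemma integral_labelLaw (hf : Measurable f) (hf01 : ∀ x, f x ∈ Icc 0 1) {φ : ℝ → ℝ}
    (hφ : Integrable φ stdG) :
    ∫ t, φ t ∂labelLaw f = ∫ g, (f g * φ g + (1 - f g) * φ (-g)) ∂stdG := by
  have hnorm {r : ℝ} (hr : r ∈ Icc 0 1) : ‖r‖ ≤ 1 := by
    rw [Real.norm_of_nonneg hr.1]
    exact hr.2
  have hpos : Integrable (fun t => f t * φ t) stdG :=
    hφ.bdd_mul hf.aestronglyMeasurable (ae_of_all _ fun t => hnorm (hf01 t))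
  have hneg : Integrable (fun t => (1 - f (-t)) * φ t) stdG :=
    hφ.bdd_mul (by fun_prop : Measurable _).aestronglyMeasurable (ae_of_all _ fun t =>
      hnorm ⟨sub_nonneg.2 (hf01 (-t)).2, sub_le_self _ (hf01 (-t)).1⟩)
  have hneg' : Integrable (fun t => (1 - f t) * φ (-t)) stdG := by
    simpa [Function.comp_def] using measurePreserving_neg_stdG.integrable_comp_of_integrable hneg
  calc ∫ t, φ t ∂labelLaw f = ∫ t, (f t * φ t + (1 - f (-t)) * φ t) ∂stdG := by
        rw [labelLaw, integral_withDensity_eq_integral_toReal_smul (by fun_prop) (by simp)]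
        congr with t
        rw [ENNReal.toReal_ofReal (by linarith [(hf01 t).1, (hf01 (-t)).2]), smul_eq_mul, add_mul]
    _ = ∫ t, f t * φ t ∂stdG + ∫ t, (1 - f t) * φ (-t) ∂stdG := by
        rw [integral_add hpos hneg, ← integral_comp_neg_stdG fun t => (1 - f (-t)) * φ t]
        simp only [neg_neg]
    _ = ∫ g, (f g * φ g + (1 - f g) * φ (-g)) ∂stdG := (integral_add hpos hneg').symm

lemma memLp_id_labelLaw_prod (hf01 : ∀ x, f x ∈ Icc 0 1) :
    MemLp id 2 ((labelLaw f).prod stdG) := by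
  have hle : (labelLaw f).prod stdG ≤ (2 : ENNReal) • stdG.prod stdG := by
    rw [← Measure.prod_smul_left]
    exact Measure.prod_mono (labelLaw_le hf01) le_rfl
  exact IsGaussian.memLp_two_id.of_measure_le_smul ENNReal.ofNat_ne_top hle

/-- The functional `(t, z) ↦ c₁ t + c₂ z`, linearly in `c = (c₁, c₂)`; it turns the arguments of
`F_κ` into an argument of `hingeNorm`. -/
def coordFunctional : ℝ × ℝ →ₗ[ℝ] StrongDual ℝ (ℝ × ℝ) :=
  (LinearMap.fst ℝ ℝ ℝ).smulRight (ContinuousLinearMap.fst ℝ ℝ ℝ) +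
    (LinearMap.snd ℝ ℝ ℝ).smulRight (ContinuousLinearMap.snd ℝ ℝ ℝ)

lemma coordFunctional_apply (c p : ℝ × ℝ) : coordFunctional c p = c.1 * p.1 + c.2 * p.2 := rfl

lemma injective_coordFunctional : Function.Injective coordFunctional := by
  intro c d h
  have hfst := congrArg (fun L : StrongDual ℝ (ℝ × ℝ) => L (1, 0)) h
  have hsnd := congrArg (fun L : StrongDual ℝ (ℝ × ℝ) => L (0, 1)) h
  simp only [coordFunctional_apply] at hfst hsnd
  exact Prod.ext (by simpa using hfst) (by simpa using hsnd)

lemma Fk_eq_hingeNorm (hf : Measurable f) (hf01 : ∀ x, f x ∈ Icc 0 1) (κ : ℝ) (c : ℝ × ℝ) :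
    Fk f κ c.1 c.2 = hingeNorm ((labelLaw f).prod stdG) κ (coordFunctional c) := by
  have := isFiniteMeasure_labelLaw hf01
  have hslice (t : ℝ) : Integrable (fun z => max (κ - coordFunctional c (t, z)) 0 ^ 2) stdG := by
    have h := integrable_sq_hinge IsGaussian.memLp_two_id (μ := stdG)
      (κ - coordFunctional c (t, 0)) ((coordFunctional c).comp (.inr ℝ ℝ ℝ))
    simpa [sub_sub, ← map_add] using h
  rw [Fk, hingeNorm, integral_prod _ (integrable_sq_hinge (memLp_id_labelLaw_prod hf01) κ _),
    integral_labelLaw hf hf01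
      (integrable_sq_hinge IsGaussian.memLp_two_id κ (coordFunctional c)).integral_prod_left]
  congr 2 with g
  rw [← integral_const_mul, ← integral_const_mul,
    ← integral_add ((hslice g).const_mul _) ((hslice (-g)).const_mul _)]
  simp only [coordFunctional_apply, mul_neg, sub_neg_eq_add, sub_add_eq_sub_sub]

lemma strictConvexOn_Fk (hf : Measurable f) (hf0 : ContinuousAt f 0) (hf01 : ∀ x, f x ∈ Icc 0 1)
    (hκ : 0 < κ) : StrictConvexOn ℝ univ fun c : ℝ × ℝ => Fk f κ c.1 c.2 := by
  have := isFiniteMeasure_labelLaw hf01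
  have hsupp : (0 : ℝ × ℝ) ∈ interior ((labelLaw f).prod stdG).support := by
    refine interior_mono (prod_support_subset _ _) ?_
    rw [interior_prod_eq, stdG.support_eq_univ, interior_univ]
    exact ⟨zero_mem_interior_support_labelLaw hf hf0, mem_univ _⟩
  simp only [Fk_eq_hingeNorm hf hf01]
  exact strictConvexOn_comp_linearMap
    (strictConvexOn_hingeNorm (memLp_id_labelLaw_prod hf01) hκ hsupp) injective_coordFunctional

end Gaussian

section Functional

/-- Multiplication by an essentially bounded function, as an operator on `Lᵖ`. -/
def mulLp {α : Type*} [MeasurableSpace α] {μ : Measure α} (p : ENNReal) [Fact (1 ≤ p)]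
    (φ : Lp ℝ ⊤ μ) : Lp ℝ p μ →L[ℝ] Lp ℝ p μ :=
  (ContinuousLinearMap.mul ℝ ℝ).holderL μ ⊤ p p φ

section mulLp

variable {α : Type*} [MeasurableSpace α] {μ : Measure α} {p : ENNReal} [Fact (1 ≤ p)]

lemma coeFn_mulLp (φ : Lp ℝ ⊤ μ) (h : Lp ℝ p μ) : mulLp p φ h =ᵐ[μ] fun x => φ x * h x :=
  (ContinuousLinearMap.mul ℝ ℝ).coeFn_holder φ h

lemma injective_mulLp {φ : Lp ℝ ⊤ μ} (hφ : ∀ᵐ x ∂μ, φ x ≠ 0) : Function.Injective (mulLp p φ) := by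
  intro h₀ h₁ heq
  refine Lp.ext ?_
  filter_upwards [hφ, coeFn_mulLp φ h₀, coeFn_mulLp φ h₁] with x hx hx₀ hx₁
  rw [heq, hx₁] at hx₀
  exact (mul_left_cancel₀ hx hx₀).symm

end mulLp

section orthoSplit

variable {H : Type*} [NormedAddCommGroup H] [InnerProductSpace ℝ H]

/-- The pair `(⟪w, x⟫, x - ⟪w, x⟫ w)`, which for a unit vector `w` is the orthogonal decomposition
of `x` along `w`. -/
def orthoSplit (w : H) : H →L[ℝ] ℝ × H :=
  (innerSL ℝ w).prod (.id ℝ H - (innerSL ℝ w).smulRight w)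

lemma orthoSplit_apply (w x : H) : orthoSplit w x = (inner ℝ w x, x - inner ℝ w x • w) := rfl

lemma injective_orthoSplit (w : H) : Function.Injective (orthoSplit w) := by
  intro x y h
  rw [orthoSplit_apply, orthoSplit_apply, Prod.mk.injEq] at h
  obtain ⟨hinner, hsub⟩ := h
  rw [hinner] at hsub
  exact sub_left_injective hsub

end orthoSplit

variable {P : Measure Pt} {f : ℝ → ℝ} {ψ κ : ℝ}

lemma coeFn_orthoSplit_snd (hW : MemLp Wc 2 P) {x : Lp ℝ 2 P} {u : Pt → ℝ} (hx : x =ᵐ[P] u) :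
    (orthoSplit (hW.toLp Wc) x).2 =ᵐ[P] projW P u := by
  rw [orthoSplit_apply, real_inner_comm, inner_eq_integral_mul hx hW.coeFn_toLp]
  filter_upwards [hx, hW.coeFn_toLp, Lp.coeFn_sub x (ip P u Wc • hW.toLp Wc),
    Lp.coeFn_smul (ip P u Wc) (hW.toLp Wc)] with q hxq hWq hsub hsmul
  simp only [ip] at hsub hsmul
  rw [hsub, Pi.sub_apply, hsmul, Pi.smul_apply, hxq, hWq]
  rfl

lemma Rfun_eq (hG : MemLp Gc 2 P) (hW : MemLp Wc 2 P) {h m : Lp ℝ 2 P}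
    (hm : m =ᵐ[P] fun q => √(Xc q) * h q) :
    Rfun f P ψ κ h =
      (√ψ)⁻¹ * Fk f κ (orthoSplit (hW.toLp Wc) m).1 ‖(orthoSplit (hW.toLp Wc) m).2‖ +
        inner ℝ (orthoSplit (hW.toLp Wc) (hG.toLp Gc)).2 m := by
  have hfst : ip P h (fun q => √(Xc q) * Wc q) = (orthoSplit (hW.toLp Wc) m).1 := by
    rw [orthoSplit_apply, inner_eq_integral_mul hW.coeFn_toLp hm, ip]
    congr with q
    ring
  have hsnd : pnorm P (projW P fun q => √(Xc q) * h q) = ‖(orthoSplit (hW.toLp Wc) m).2‖ :=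
    (norm_eq_sqrt_integral_mul_self (coeFn_orthoSplit_snd hW hm)).symm
  have hlin : ip P h (fun q => √(Xc q) * projW P Gc q) =
      inner ℝ (orthoSplit (hW.toLp Wc) (hG.toLp Gc)).2 m := by
    rw [inner_eq_integral_mul (coeFn_orthoSplit_snd hW hG.coeFn_toLp) hm, ip]
    congr with q
    ring
  rw [Rfun, hfst, hsnd, hlin]

lemma memLp_top_sqrt_Xc {xmax : ℝ} (hX : ∀ᵐ q ∂P, Xc q ≤ xmax) :
    MemLp (fun q => √(Xc q)) ⊤ P := by
  refine memLp_top_of_bound measurable_snd.fst.sqrt.aestronglyMeasurable (√xmax) ?_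
  filter_upwards [hX] with q hq
  rw [Real.norm_of_nonneg (Real.sqrt_nonneg _)]
  exact Real.sqrt_le_sqrt hq

lemma coeFn_mulLp_sqrt_Xc (hsqrt : MemLp (fun q => √(Xc q)) ⊤ P) (h : Lp ℝ 2 P) :
    mulLp 2 (hsqrt.toLp _) h =ᵐ[P] fun q => √(Xc q) * h q := by
  filter_upwards [coeFn_mulLp (hsqrt.toLp _) h, hsqrt.coeFn_toLp] with q hmul hq
  rw [hmul, hq]

lemma continuous_Rfun (hf : Measurable f) (hf0 : ContinuousAt f 0)
    (hf01 : ∀ x, f x ∈ Icc 0 1) (hG : MemLp Gc 2 P) (hW : MemLp Wc 2 P)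
    (hsqrt : MemLp (fun q => √(Xc q)) ⊤ P) (hκ : 0 < κ) :
    Continuous fun h : Lp ℝ 2 P => Rfun f P ψ κ h := by
  have hF : Continuous fun c : ℝ × ℝ => Fk f κ c.1 c.2 := continuousOn_univ.1 <|
    (strictConvexOn_Fk hf hf0 hf01 hκ).convexOn.continuousOn isOpen_univ
  simp only [Rfun_eq hG hW (coeFn_mulLp_sqrt_Xc hsqrt _)]
  fun_prop

lemma strictConvexOn_Rfun (hf : Measurable f) (hf0 : ContinuousAt f 0)
    (hf01 : ∀ x, f x ∈ Icc 0 1) (hG : MemLp Gc 2 P) (hW : MemLp Wc 2 P)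
    (hsqrt : MemLp (fun q => √(Xc q)) ⊤ P) (hκ : 0 < κ)
    (hX : ∀ᵐ q ∂P, 0 < Xc q) (hψ : 0 < ψ) :
    StrictConvexOn ℝ univ fun h : Lp ℝ 2 P => Rfun f P ψ κ h := by
  set A := mulLp 2 (hsqrt.toLp _)
  have hA : Function.Injective A := by
    refine injective_mulLp ?_
    filter_upwards [hX, hsqrt.coeFn_toLp] with q hq hsq
    rw [hsq]
    exact (Real.sqrt_pos.2 hq).ne'
  set T := orthoSplit (hW.toLp Wc)
  have hFk : StrictConvexOn ℝ univ fun p : ℝ × Lp ℝ 2 P => Fk f κ p.1 ‖p.2‖ :=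
    strictConvexOn_comp_norm_snd (strictConvexOn_Fk hf hf0 hf01 hκ) fun c t => Fk_neg_right f κ c t
  have hFkTA : StrictConvexOn ℝ univ fun h => Fk f κ (T (A h)).1 ‖(T (A h)).2‖ :=
    strictConvexOn_comp_linearMap (A := (T ∘L A).toLinearMap) hFk
      ((injective_orthoSplit _).comp hA)
  have hlin : ConvexOn ℝ univ fun h => inner ℝ (T (hG.toLp Gc)).2 (A h) :=
    (innerSL ℝ (T (hG.toLp Gc)).2 ∘L A).toLinearMap.convexOn convex_univ
  simp only [Rfun_eq hG hW (coeFn_mulLp_sqrt_Xc hsqrt _)]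
  exact (strictConvexOn_const_mul hFkTA (inv_pos.2 (Real.sqrt_pos.2 hψ))).add_convexOn hlin

end Functional

theorem statement_2_general (f : ℝ → ℝ) (hf : Measurable f) (hf0 : ContinuousAt f 0)
    (hf01 : ∀ x, f x ∈ Icc (0 : ℝ) 1) (P : Measure Pt) (hG : MemLp Gc 2 P) (hW : MemLp Wc 2 P)
    (xmax : ℝ) (hX : ∀ᵐ q ∂P, Xc q ∈ Ioc 0 xmax) (ψ κ : ℝ) (hψ : 0 < ψ) (hκ : 0 < κ) :
    LowerSemicontinuous (fun h : WeakSpace ℝ (Lp ℝ 2 P) =>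
        Rfun f P ψ κ (show Lp ℝ 2 P from h))
    ∧ (∀ h₀ h₁ : Lp ℝ 2 P, 0 < P {q | h₀ q ≠ h₁ q} →
        Rfun f P ψ κ (((2:ℝ)⁻¹ • (h₀ + h₁) : Lp ℝ 2 P))
          < (Rfun f P ψ κ h₀ + Rfun f P ψ κ h₁) / 2)
    ∧ (∃ hs : Lp ℝ 2 P, ‖hs‖ ≤ 1
        ∧ (∀ h : Lp ℝ 2 P, ‖h‖ ≤ 1 → Rfun f P ψ κ hs ≤ Rfun f P ψ κ h)
        ∧ (∀ h : Lp ℝ 2 P, ‖h‖ ≤ 1 → Rfun f P ψ κ h = Rfun f P ψ κ hs →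
            (h : Pt → ℝ) =ᵐ[P] (hs : Pt → ℝ))) := by
  have hsqrt := memLp_top_sqrt_Xc (hX.mono fun _ hq => hq.2)
  have hconv := strictConvexOn_Rfun hf hf0 hf01 hG hW hsqrt hκ (hX.mono fun _ hq => hq.1) hψ
  have hlsc := (continuous_Rfun (ψ := ψ) hf hf0 hf01 hG hW hsqrt hκ).lowerSemicontinuous
  refine ⟨lowerSemicontinuous_comp_toWeakSpace_symm hlsc hconv.convexOn.quasiconvexOn,
    fun h₀ h₁ hne => ?_, ?_⟩
  · refine lt_half_add_of_strictConvexOn hconv ?_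
    rintro rfl
    simp at hne
  · obtain ⟨hs, hs1, hmin⟩ := exists_isMinOn_of_reflexive
      surjective_inclusionInDoubleDual_of_hilbert hlsc hconv.convexOn.quasiconvexOn
      (Metric.nonempty_closedBall.2 zero_le_one) (convex_closedBall (0 : Lp ℝ 2 P) 1)
      Metric.isClosed_closedBall Metric.isBounded_closedBall
    simp only [mem_closedBall_zero_iff] at hs1
    refine ⟨hs, hs1, fun h hh => hmin (mem_closedBall_zero_iff.2 hh), fun h hh heq => ?_⟩
    have hmin' : IsMinOn (fun h : Lp ℝ 2 P => Rfun f P ψ κ h) (Metric.closedBall 0 1) h :=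
      fun h' hh' => heq.le.trans (hmin hh')
    rw [(hconv.subset (subset_univ _) (convex_closedBall _ _)).eq_of_isMinOn hmin' hmin
      (mem_closedBall_zero_iff.2 hh) (mem_closedBall_zero_iff.2 hs1)]

/-- The functional `𝓡_{ψ,κ,P}` is lower semicontinuous with respect to the weak topology of
`L²(P)` and strictly convex (in the midpoint sense, for functions differing on a set of positive
measure); consequently its minimum over the closed unit ball of `L²(P)` is attained at a
function `h*` which is unique up to `P`-null sets. -/
theorem statement_2 (f : ℝ → ℝ) (hf : Continuous f) (hf01 : ∀ x, f x ∈ Set.Icc (0:ℝ) 1)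
    (hnd : NonDeg f)
    (P : Measure Pt) [IsProbabilityMeasure P]
    (xmin xmax : ℝ) (hxmin : 0 < xmin) (hxx : xmin ≤ xmax)
    (hG2 : Integrable (fun q => (Gc q) ^ 2) P)
    (hW2 : ∫ q, (Wc q) ^ 2 ∂P = 1)
    (hX : ∀ᵐ q ∂P, Xc q ∈ Set.Icc xmin xmax)
    (ψ κ : ℝ) (hψ : 0 < ψ) (hκ : 0 < κ) :
    LowerSemicontinuous (fun h : WeakSpace ℝ (Lp ℝ 2 P) =>
        Rfun f P ψ κ (show Lp ℝ 2 P from h))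
    ∧ (∀ h₀ h₁ : Lp ℝ 2 P, 0 < P {q | h₀ q ≠ h₁ q} →
        Rfun f P ψ κ (((2:ℝ)⁻¹ • (h₀ + h₁) : Lp ℝ 2 P))
          < (Rfun f P ψ κ h₀ + Rfun f P ψ κ h₁) / 2)
    ∧ (∃ hs : Lp ℝ 2 P, ‖hs‖ ≤ 1
        ∧ (∀ h : Lp ℝ 2 P, ‖h‖ ≤ 1 → Rfun f P ψ κ hs ≤ Rfun f P ψ κ h)
        ∧ (∀ h : Lp ℝ 2 P, ‖h‖ ≤ 1 → Rfun f P ψ κ h = Rfun f P ψ κ hs →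
            (h : Pt → ℝ) =ᵐ[P] (hs : Pt → ℝ))) :=
  statement_2_general f hf.measurable hf.continuousAt hf01 P
    ((memLp_two_iff_integrable_sq measurable_fst.aestronglyMeasurable).2 hG2)
    ((memLp_two_iff_integrable_sq measurable_snd.snd.aestronglyMeasurable).2
      (integrable_of_integral_eq_one hW2))
    xmax (hX.mono fun _ hq => ⟨hxmin.trans_le hq.1, hq.2⟩) ψ κ hψ hκ

end MaxMargin
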